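/- Let H be a Hilbert space and let G ∈ L(H) be a norm-attaining operator with ‖G‖ = 1. Let M_G := {x ∈ S_H : ‖Gx‖ = 1} and let E be the closed linear span of M_G. Then the following are equivalent: (i) sup{‖Gx‖ : x ∈ S_H ∩ E^⊥} < 1; (ii) for every ε > 0 there exists δ > 0 such that whenever x ∈ S_H and ‖Gx‖ > 1−δ, one has dist(x, E) < ε; (iii) for every T ∈ L(H), ‖T‖_G = sup_{x ∈ M_G} ‖Tx‖. -/

import Mathlib

open Filter Topology

variable {𝕜 : Type*} [RCLike 𝕜]

/-- The `G`-norm of an operator `T`: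
`‖T‖_G := inf_{δ>0} sup {‖Tx‖ : x ∈ S_H, ‖Gx‖ > 1 - δ}`. -/
noncomputable def Gnorm {H : Type*} [NormedAddCommGroup H] [InnerProductSpace 𝕜 H]
    (G T : H →L[𝕜] H) : ℝ :=
  ⨅ δ : {δ : ℝ // 0 < δ},
    sSup {r : ℝ | ∃ x : H, ‖x‖ = 1 ∧ 1 - (δ : ℝ) < ‖G x‖ ∧ r = ‖T x‖}

/-- The norm-attainment set `M_G := {x ∈ S_H : ‖Gx‖ = 1}` of a norm-one operator `G`. -/
def MGset {H : Type*} [NormedAddCommGroup H] [InnerProductSpace 𝕜 H]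
    (G : H →L[𝕜] H) : Set H :=
  {x : H | ‖x‖ = 1 ∧ ‖G x‖ = 1}

/-- `E`: the closed linear span of `M_G`. -/
noncomputable def Espan {H : Type*} [NormedAddCommGroup H] [InnerProductSpace 𝕜 H]
    (G : H →L[𝕜] H) : Submodule 𝕜 H :=
  (Submodule.span 𝕜 (MGset G)).topologicalClosure

open ContinuousLinearMap in
theorem adj_of_att {H : Type*} [NormedAddCommGroup H] [InnerProductSpace 𝕜 H]
    [CompleteSpace H] (G : H →L[𝕜] H) (hG : ‖G‖ = 1) (x : H) (hx : ‖G x‖ = ‖x‖) :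
    adjoint G (G x) = x := by
  have h1 : ‖adjoint G (G x)‖ ≤ ‖x‖ := by
    have h := (adjoint G).le_opNorm (G x)
    have h2 : ‖adjoint G‖ = ‖G‖ := LinearIsometryEquiv.norm_map _ _
    rw [h2, hG, one_mul, hx] at h
    exact h
  have h3 : ‖adjoint G (G x) - x‖ ^ 2 ≤ 0 := by
    rw [@norm_sub_sq 𝕜, adjoint_inner_left, inner_self_eq_norm_sq (𝕜 := 𝕜), hx]
    nlinarith [norm_nonneg (adjoint G (G x)), norm_nonneg x]
  have h4 : ‖adjoint G (G x) - x‖ = 0 := by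
    nlinarith [norm_nonneg (adjoint G (G x) - x)]
  exact sub_eq_zero.mp (norm_eq_zero.mp h4)

open ContinuousLinearMap in
theorem adj_of_mem {H : Type*} [NormedAddCommGroup H] [InnerProductSpace 𝕜 H]
    [CompleteSpace H] (G : H →L[𝕜] H) (hG : ‖G‖ = 1) (x : H) (hx : x ∈ Espan G) :
    adjoint G (G x) = x := by
  have hle : Espan G ≤ LinearMap.ker
      ((adjoint G ∘L G - ContinuousLinearMap.id 𝕜 H : H →L[𝕜] H) : H →ₗ[𝕜] H) := by
    refine Submodule.topologicalClosure_minimal _ ?_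
      (ContinuousLinearMap.isClosed_ker (adjoint G ∘L G - ContinuousLinearMap.id 𝕜 H))
    rw [Submodule.span_le]
    intro y hy
    have := adj_of_att G hG y (hy.2.trans hy.1.symm)
    simp [this]
  have := hle hx
  simpa [sub_eq_zero] using this

open ContinuousLinearMap in
theorem norm_of_mem {H : Type*} [NormedAddCommGroup H] [InnerProductSpace 𝕜 H]
    [CompleteSpace H] (G : H →L[𝕜] H) (hG : ‖G‖ = 1) (x : H) (hx : x ∈ Espan G) :
    ‖G x‖ = ‖x‖ := by
  have h : ‖G x‖ ^ 2 = ‖x‖ ^ 2 := by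
    rw [← inner_self_eq_norm_sq (𝕜 := 𝕜), ← inner_self_eq_norm_sq (𝕜 := 𝕜),
      ← adjoint_inner_left, adj_of_mem G hG x hx]
  exact (sq_eq_sq₀ (norm_nonneg _) (norm_nonneg _)).mp h

open ContinuousLinearMap in
theorem norm_sq_add {H : Type*} [NormedAddCommGroup H] [InnerProductSpace 𝕜 H]
    [CompleteSpace H] (G : H →L[𝕜] H) (hG : ‖G‖ = 1) (p q : H) (hp : p ∈ Espan G)
    (hq : q ∈ (Espan G)ᗮ) : ‖G (p + q)‖ ^ 2 = ‖p‖ ^ 2 + ‖G q‖ ^ 2 := by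
  have h0 : inner 𝕜 (G p) (G q) = 0 := by
    rw [← adjoint_inner_left, adj_of_mem G hG p hp]
    exact hq p hp
  rw [map_add, @norm_add_sq 𝕜, h0, norm_of_mem G hG p hp]
  simp

theorem exists_decomp {H : Type*} [NormedAddCommGroup H] [InnerProductSpace 𝕜 H]
    [CompleteSpace H] (G : H →L[𝕜] H) (x : H) :
    ∃ p ∈ Espan G, ∃ q ∈ (Espan G)ᗮ, x = p + q ∧ ‖x‖ ^ 2 = ‖p‖ ^ 2 + ‖q‖ ^ 2 ∧
      Metric.infDist x (Espan G : Set H) = ‖q‖ := by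
  haveI : CompleteSpace (Espan G) :=
    (Submodule.isClosed_topologicalClosure _).completeSpace_coe
  obtain ⟨p, hp, q, hq, rfl⟩ := (Espan G).exists_add_mem_mem_orthogonal x
  have pyth : ∀ r ∈ Espan G, ‖r + q‖ ^ 2 = ‖r‖ ^ 2 + ‖q‖ ^ 2 := by
    intro r hr
    rw [@norm_add_sq 𝕜, hq r hr]
    simp
  refine ⟨p, hp, q, hq, rfl, pyth p hp, le_antisymm ?_ ?_⟩
  · have := Metric.infDist_le_dist_of_mem (x := p + q) (s := (Espan G : Set H)) hp
    simpa [dist_eq_norm] using this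
  · rw [Metric.le_infDist ⟨p, hp⟩]
    intro y hy
    have h := pyth (p - y) (sub_mem hp hy)
    rw [dist_eq_norm, show p + q - y = p - y + q by abel]
    nlinarith [norm_nonneg (p - y + q), norm_nonneg q, sq_nonneg ‖p - y‖]

/-- For a Hilbert space `H` and a norm-attaining norm-one `G ∈ L(H)`, with
`E = closed span of M_G`, the following are equivalent:
(i) `sup {‖Gx‖ : x ∈ S_H ∩ E^⊥} < 1`;
(ii) for every `ε > 0` there is `δ > 0` such that `x ∈ S_H`, `‖Gx‖ > 1 - δ` imply
`dist(x, E) < ε`;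
(iii) for every `T ∈ L(H)`, `‖T‖_G = sup_{x ∈ M_G} ‖Tx‖`. -/
theorem stmt_18 {H : Type*} [NormedAddCommGroup H] [InnerProductSpace 𝕜 H]
    [CompleteSpace H]
    (G : H →L[𝕜] H) (hG : ‖G‖ = 1) (hatt : ∃ x : H, ‖x‖ = 1 ∧ ‖G x‖ = 1) :
    List.TFAE
      [sSup {r : ℝ | ∃ x : H, ‖x‖ = 1 ∧ x ∈ (Espan G)ᗮ ∧ r = ‖G x‖} < 1,
       ∀ ε > (0 : ℝ), ∃ δ > (0 : ℝ), ∀ x : H, ‖x‖ = 1 → 1 - δ < ‖G x‖ →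
         Metric.infDist x (Espan G : Set H) < ε,
       ∀ T : H →L[𝕜] H, Gnorm G T = sSup {r : ℝ | ∃ x ∈ MGset G, r = ‖T x‖}] := by
  have hG1 : ∀ x, ‖G x‖ ≤ ‖x‖ := fun x => by simpa [hG] using G.le_opNorm x
  haveI : CompleteSpace (Espan G) :=
    (Submodule.isClosed_topologicalClosure _).completeSpace_coe
  have hMe : ∀ x ∈ MGset G, x ∈ Espan G := fun x hx =>
    Submodule.le_topologicalClosure _ (Submodule.subset_span hx)
  have hbddM : ∀ T : H →L[𝕜] H, BddAbove {r : ℝ | ∃ x ∈ MGset G, r = ‖T x‖} := by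
    rintro T
    refine ⟨‖T‖, ?_⟩
    rintro _ ⟨x, hx, rfl⟩
    simpa [hx.1] using T.le_opNorm x
  have hbddD : ∀ (T : H →L[𝕜] H) (δ : ℝ),
      BddAbove {r : ℝ | ∃ x : H, ‖x‖ = 1 ∧ 1 - δ < ‖G x‖ ∧ r = ‖T x‖} := by
    rintro T δ
    refine ⟨‖T‖, ?_⟩
    rintro _ ⟨x, hx, -, rfl⟩
    simpa [hx] using T.le_opNorm x
  have hbddG : BddAbove {r : ℝ | ∃ x : H, ‖x‖ = 1 ∧ x ∈ (Espan G)ᗮ ∧ r = ‖G x‖} := by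
    refine ⟨1, ?_⟩
    rintro _ ⟨x, hx, -, rfl⟩
    simpa [hx] using hG1 x
  tfae_have 1 → 2 := by
    intro h1 ε hε
    set s := sSup {r : ℝ | ∃ x : H, ‖x‖ = 1 ∧ x ∈ (Espan G)ᗮ ∧ r = ‖G x‖} with hs
    have hs0 : 0 ≤ s := by
      apply Real.sSup_nonneg
      rintro _ ⟨x, -, -, rfl⟩
      exact norm_nonneg _
    have hq' : ∀ q ∈ (Espan G)ᗮ, ‖G q‖ ≤ s * ‖q‖ := by
      intro q hq
      by_cases h0 : q = 0
      · simp [h0]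
      have hn : 0 < ‖q‖ := norm_pos_iff.mpr h0
      have hm : ‖G (((‖q‖⁻¹ : ℝ) : 𝕜) • q)‖ ≤ s := by
        apply le_csSup hbddG
        refine ⟨_, ?_, Submodule.smul_mem _ _ hq, rfl⟩
        rw [norm_smul, RCLike.norm_ofReal, abs_of_pos (inv_pos.mpr hn)]
        exact inv_mul_cancel₀ hn.ne'
      rw [map_smul, norm_smul, RCLike.norm_ofReal, abs_of_pos (inv_pos.mpr hn),
        inv_mul_le_iff₀ hn] at hm
      linarith
    have hs2 : 0 < 1 - s ^ 2 := by nlinarith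
    refine ⟨ε ^ 2 * (1 - s ^ 2) / 2, by positivity, ?_⟩
    intro x hx hGx
    obtain ⟨p, hp, q, hq, hxe, hpy, hd⟩ := exists_decomp G x
    have hsq := norm_sq_add G hG p q hp hq
    rw [← hxe] at hsq
    rw [hd]
    have hqs := pow_le_pow_left₀ (norm_nonneg _) (hq' q hq) 2
    have hx1 := hG1 x
    rw [hx] at hx1 hpy
    have hg0 := norm_nonneg (G x)
    have h3 : (1 - s ^ 2) * ‖q‖ ^ 2 < (1 - s ^ 2) * ε ^ 2 := by
      have : 1 - ‖G x‖ ^ 2 ≤ 2 * (1 - ‖G x‖) := by nlinarith [sq_nonneg (1 - ‖G x‖)]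
      rw [mul_pow] at hqs
      linarith
    have h4 := lt_of_mul_lt_mul_left h3 hs2.le
    exact lt_of_pow_lt_pow_left₀ 2 hε.le h4
  tfae_have 2 → 3 := by
    intro h2 T
    have hbb : BddBelow (Set.range fun δ : {δ : ℝ // 0 < δ} =>
        sSup {r : ℝ | ∃ x : H, ‖x‖ = 1 ∧ 1 - (δ : ℝ) < ‖G x‖ ∧ r = ‖T x‖}) := by
      refine ⟨0, ?_⟩
      rintro _ ⟨δ, rfl⟩
      apply Real.sSup_nonneg
      rintro _ ⟨x, -, -, rfl⟩
      exact norm_nonneg _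
    obtain ⟨x₀, hx₀⟩ := hatt
    apply le_antisymm
    · set S := sSup {r : ℝ | ∃ x ∈ MGset G, r = ‖T x‖} with hS
      have hS0 : 0 ≤ S := by
        apply Real.sSup_nonneg
        rintro _ ⟨x, -, rfl⟩
        exact norm_nonneg _
      have hp' : ∀ p ∈ Espan G, ‖T p‖ ≤ S * ‖p‖ := by
        intro q hq
        by_cases h0 : q = 0
        · simp [h0]
        have hn : 0 < ‖q‖ := norm_pos_iff.mpr h0
        have hm : ‖T (((‖q‖⁻¹ : ℝ) : 𝕜) • q)‖ ≤ S := by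
          apply le_csSup (hbddM T)
          have h1 : ‖((‖q‖⁻¹ : ℝ) : 𝕜) • q‖ = 1 := by
            rw [norm_smul, RCLike.norm_ofReal, abs_of_pos (inv_pos.mpr hn)]
            exact inv_mul_cancel₀ hn.ne'
          exact ⟨_, ⟨h1, (norm_of_mem G hG _ (Submodule.smul_mem _ _ hq)).trans h1⟩, rfl⟩
        rw [map_smul, norm_smul, RCLike.norm_ofReal, abs_of_pos (inv_pos.mpr hn),
          inv_mul_le_iff₀ hn] at hm
        linarith
      refine le_of_forall_pos_le_add fun η hη => ?_
      have hT0 := norm_nonneg T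
      obtain ⟨δ, hδ, h⟩ := h2 (η / (‖T‖ + 1)) (by positivity)
      refine (ciInf_le hbb ⟨δ, hδ⟩).trans ?_
      refine csSup_le ⟨_, x₀, hx₀.1, ?_, rfl⟩ ?_
      · rw [hx₀.2]
        show 1 - δ < 1
        linarith
      rintro _ ⟨x, hx, hGx, rfl⟩
      obtain ⟨p, hp, q, hq, hxe, hpy, hd⟩ := exists_decomp G x
      have hlt := h x hx hGx
      rw [hd, lt_div_iff₀ (by positivity)] at hlt
      have hp1 : ‖p‖ ≤ 1 := by
        rw [hx] at hpy
        nlinarith [sq_nonneg ‖q‖, norm_nonneg p]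
      have e1 : ‖T x‖ ≤ ‖T p‖ + ‖T q‖ := by
        rw [hxe, map_add]
        exact norm_add_le _ _
      have e2 := hp' p hp
      have e3 := T.le_opNorm q
      have e4 := mul_le_mul_of_nonneg_left hp1 hS0
      nlinarith [norm_nonneg q]
    · haveI : Nonempty {δ : ℝ // 0 < δ} := ⟨⟨1, one_pos⟩⟩
      refine le_ciInf fun δ => ?_
      refine csSup_le_csSup (hbddD T δ) ⟨_, x₀, hx₀, rfl⟩ ?_
      rintro _ ⟨x, hx, rfl⟩
      refine ⟨x, hx.1, ?_, rfl⟩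
      rw [hx.2]
      linarith [δ.2]
  tfae_have 3 → 1 := by
    intro h3
    by_contra hcon
    rw [not_lt] at hcon
    have hne : {r : ℝ | ∃ x : H, ‖x‖ = 1 ∧ x ∈ (Espan G)ᗮ ∧ r = ‖G x‖}.Nonempty := by
      by_contra he
      rw [Set.not_nonempty_iff_eq_empty] at he
      rw [he, Real.sSup_empty] at hcon
      linarith
    have h := h3 (Espan G)ᗮ.starProjection
    have hz : sSup {r : ℝ | ∃ x ∈ MGset G, r = ‖(Espan G)ᗮ.starProjection x‖} ≤ 0 := by
      apply Real.sSup_le _ le_rfl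
      rintro _ ⟨x, hx, rfl⟩
      have : (Espan G)ᗮ.starProjection x = 0 := by
        rw [Submodule.starProjection_apply_eq_zero_iff]
        exact Submodule.le_orthogonal_orthogonal _ (hMe x hx)
      rw [this, norm_zero]
    have h1 : 1 ≤ Gnorm G (Espan G)ᗮ.starProjection := by
      haveI : Nonempty {δ : ℝ // 0 < δ} := ⟨⟨1, one_pos⟩⟩
      refine le_ciInf fun δ => ?_
      have hlt : 1 - (δ : ℝ) < sSup {r : ℝ | ∃ x : H, ‖x‖ = 1 ∧ x ∈ (Espan G)ᗮ ∧ r = ‖G x‖} := by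
        linarith [δ.2]
      obtain ⟨_, ⟨x, hx, hxE, rfl⟩, hl⟩ := exists_lt_of_lt_csSup hne hlt
      apply le_csSup (hbddD _ _)
      refine ⟨x, hx, hl, ?_⟩
      rw [Submodule.starProjection_eq_self_iff.mpr hxE, hx]
    linarith
  tfae_finish
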